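/- Let a budget profile be given (integer m ≥ 1, strictly increasing positive real privacy budgets ε_1 < ε_2 < ⋯ < ε_m, positive integer counts n_1, …, n_m, n = n_1 + ⋯ + n_m, Z = (n − n_m)(n − n_m + 1/4)), let d ≥ 1 and α ≥ 1 be integers, and let e_nlf ≥ 0 be a real number. Then errO_{1/d}(1/2) + (1/(2α+1)) · ( Σ_{k=1}^{α+1} errO_1(k) + α · e_nlf ) ≤ min( 8/(d² ε_1²) , Z + 8/(d² ε_m²) ) + (1/(2α+1)) · ( min( (2/ε_1²)·H²_{α+1} , (α+1)·Z + (2/ε_m²)·H²_{α+1} ) + α · e_nlf ). (Arithmetic form of Theorem 3, case α ≤ w_L: the average per-time-slot error of Personalized Budget Absorption, composed of the dissimilarity-calculation error plus the average over 2α+1 slots of the skipped-publication errors, the publication error, and α nullified-publication errors each of average error e_nlf, is bounded by min(8/(d²ε_L²), Z + 8/(d²ε_R²)) + (1/(2α+1))(err̃^{(s,p)}_NOP + α·ērr_nlf) with ε_L = ε_1, ε_R = ε_m.) -/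

import Mathlib

open Finset

/-- Sampling probability p_k(θ) = (e^{ε_k} − 1)/(e^{θ} − 1). -/
noncomputable def samplingP {m : ℕ} (ε : Fin m → ℝ) (k : Fin m) (θ : ℝ) : ℝ :=
  (Real.exp (ε k) - 1) / (Real.exp θ - 1)

/-- Sampling error err_s(θ). -/
noncomputable def errS {m : ℕ} (ε : Fin m → ℝ) (nn : Fin m → ℕ) (θ : ℝ) : ℝ :=
  (∑ k, if ε k < θ then (nn k : ℝ) * samplingP ε k θ * (1 - samplingP ε k θ) else 0)
    + (∑ k, if ε k < θ then (nn k : ℝ) * (1 - samplingP ε k θ) else 0) ^ 2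

/-- Noise error err_dp(θ) = 2I²/θ². -/
noncomputable def errDP (I θ : ℝ) : ℝ := 2 * I ^ 2 / θ ^ 2

/-- Total error err(θ) = err_s(θ) + err_dp(θ). -/
noncomputable def errTot {m : ℕ} (ε : Fin m → ℝ) (nn : Fin m → ℕ) (I θ : ℝ) : ℝ :=
  errS ε nn θ + errDP I θ

/-- OBS error: errO_I = min_{1 ≤ j ≤ m} err(ε_j). -/
noncomputable def errO {m : ℕ} (hm : 0 < m) (ε : Fin m → ℝ) (nn : Fin m → ℕ) (I : ℝ) : ℝ :=
  Finset.univ.inf' (Finset.univ_nonempty_iff.mpr (Fin.pos_iff_nonempty.mp hm))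
    (fun j => errTot ε nn I (ε j))

/-- Index of the smallest budget ε_1. -/
def firstIdx {m : ℕ} (hm : 0 < m) : Fin m := ⟨0, hm⟩

/-- Index of the largest budget ε_m. -/
def lastIdx {m : ℕ} (hm : 0 < m) : Fin m := ⟨m - 1, Nat.sub_lt hm Nat.one_pos⟩

/-- Z = (n − n_m)(n − n_m + 1/4). -/
noncomputable def Zval {m : ℕ} (hm : 0 < m) (nn : Fin m → ℕ) : ℝ :=
  ((∑ j, (nn j : ℝ)) - nn (lastIdx hm)) * ((∑ j, (nn j : ℝ)) - nn (lastIdx hm) + 1 / 4)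

/-- N-th square harmonic number H²_N = Σ_{k=1}^N 1/k². -/
noncomputable def sqHarmonic (N : ℕ) : ℝ := ∑ k ∈ Finset.Icc 1 N, 1 / (k : ℝ) ^ 2

/-- No user is sampled at the smallest budget, so its sampling error vanishes. -/
lemma errS_firstIdx {m : ℕ} (hm : 0 < m) {ε : Fin m → ℝ} (hmono : Monotone ε)
    (nn : Fin m → ℕ) : errS ε nn (ε (firstIdx hm)) = 0 := by
  have h : ∀ k, ¬ ε k < ε (firstIdx hm) := fun k =>
    not_lt.mpr (hmono (Fin.mk_le_of_le_val (Nat.zero_le _)))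
  simp [errS, h]

lemma samplingP_nonneg {m : ℕ} {ε : Fin m → ℝ} {k : Fin m} {θ : ℝ} (hk : 0 ≤ ε k)
    (hθ : 0 ≤ θ) : 0 ≤ samplingP ε k θ :=
  div_nonneg (sub_nonneg.mpr (Real.one_le_exp hk)) (sub_nonneg.mpr (Real.one_le_exp hθ))

lemma samplingP_le_one {m : ℕ} {ε : Fin m → ℝ} {k : Fin m} {θ : ℝ} (hθ : 0 ≤ θ)
    (hk : ε k ≤ θ) : samplingP ε k θ ≤ 1 :=
  div_le_one_of_le₀ (sub_le_sub_right (Real.exp_le_exp.mpr hk) 1)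
    (sub_nonneg.mpr (Real.one_le_exp hθ))

lemma sum_ite_ne_lastIdx {m : ℕ} (hm : 0 < m) (f : Fin m → ℝ) :
    (∑ k, if k ≠ lastIdx hm then f k else 0) = (∑ k, f k) - f (lastIdx hm) := by
  rw [← Finset.sum_filter, Finset.filter_ne', Finset.sum_erase_eq_sub (Finset.mem_univ _)]

/-- The sampling error at the largest budget is at most `Z`. -/
lemma errS_lastIdx_le {m : ℕ} (hm : 0 < m) {ε : Fin m → ℝ} (hpos : ∀ j, 0 < ε j)
    (nn : Fin m → ℕ) : errS ε nn (ε (lastIdx hm)) ≤ Zval hm nn := by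
  set θ := ε (lastIdx hm) with hθ
  set S : ℝ := (∑ j, (nn j : ℝ)) - nn (lastIdx hm) with hS
  have hθ0 : 0 ≤ θ := (hpos _).le
  have hne : ∀ k, ε k < θ → k ≠ lastIdx hm := by
    rintro k hk rfl
    exact lt_irrefl _ hk
  have hvar : (∑ k, if ε k < θ then (nn k : ℝ) * samplingP ε k θ * (1 - samplingP ε k θ)
      else 0) ≤ S * (1 / 4) := by
    rw [hS, ← sum_ite_ne_lastIdx hm fun k => (nn k : ℝ), Finset.sum_mul]
    refine Finset.sum_le_sum fun k _ => ?_
    split_ifs with h h' h'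
    · have hn : (0 : ℝ) ≤ nn k := Nat.cast_nonneg _
      nlinarith [mul_nonneg hn (sq_nonneg (samplingP ε k θ - 1 / 2))]
    · exact absurd (hne k h) h'
    · positivity
    · simp
  have hbias : (∑ k, if ε k < θ then (nn k : ℝ) * (1 - samplingP ε k θ) else 0) ≤ S := by
    rw [hS, ← sum_ite_ne_lastIdx hm fun k => (nn k : ℝ)]
    refine Finset.sum_le_sum fun k _ => ?_
    split_ifs with h h' h'
    · exact mul_le_of_le_one_right (Nat.cast_nonneg _)
        (sub_le_self _ (samplingP_nonneg (hpos k).le hθ0))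
    · exact absurd (hne k h) h'
    · positivity
    · rfl
  have hbias0 : 0 ≤ ∑ k, if ε k < θ then (nn k : ℝ) * (1 - samplingP ε k θ) else 0 := by
    refine Finset.sum_nonneg fun k _ => ?_
    split_ifs with h
    · exact mul_nonneg (Nat.cast_nonneg _) (sub_nonneg.mpr (samplingP_le_one hθ0 h.le))
    · rfl
  have hsq := pow_le_pow_left₀ hbias0 hbias 2
  calc errS ε nn θ ≤ S * (1 / 4) + S ^ 2 := add_le_add hvar hsq
    _ = Zval hm nn := by rw [Zval, ← hS]; ring

lemma errO_scaled_le_first {m : ℕ} (hm : 0 < m) {ε : Fin m → ℝ} (hmono : Monotone ε)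
    (nn : Fin m → ℕ) (I : ℝ) {β : ℝ} (hβ : 0 ≤ β) :
    errO hm (fun j => β * ε j) nn I ≤ errDP I (β * ε (firstIdx hm)) := by
  refine (Finset.inf'_le _ (Finset.mem_univ (firstIdx hm))).trans_eq ?_
  have h := errS_firstIdx hm (hmono.const_mul hβ) nn
  simp only [errTot, h, zero_add]

lemma errO_scaled_le_last {m : ℕ} (hm : 0 < m) {ε : Fin m → ℝ} (hpos : ∀ j, 0 < ε j)
    (nn : Fin m → ℕ) (I : ℝ) {β : ℝ} (hβ : 0 < β) :
    errO hm (fun j => β * ε j) nn I ≤ Zval hm nn + errDP I (β * ε (lastIdx hm)) :=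
  (Finset.inf'_le _ (Finset.mem_univ (lastIdx hm))).trans
    (add_le_add_left (errS_lastIdx_le hm (fun j => mul_pos hβ (hpos j)) nn) _)

lemma errDP_half (d x : ℝ) : errDP (1 / d) (1 / 2 * x) = 8 / (d ^ 2 * x ^ 2) := by
  simp only [errDP, div_eq_mul_inv, mul_pow, mul_inv, inv_pow]
  ring

lemma sum_errDP_one (N : ℕ) (x : ℝ) :
    ∑ k ∈ Finset.Icc 1 N, errDP 1 ((k : ℝ) * x) = 2 / x ^ 2 * sqHarmonic N := by
  rw [sqHarmonic, Finset.mul_sum]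
  refine Finset.sum_congr rfl fun k _ => ?_
  simp only [errDP, div_eq_mul_inv, mul_pow, mul_inv]
  ring

/-- Arithmetic form of Theorem 3, case α ≤ w_L: the average per-time-slot error of
Personalized Budget Absorption is bounded as stated. -/
theorem pba_average_error_bound (m : ℕ) (hm : 0 < m) (ε : Fin m → ℝ) (nn : Fin m → ℕ)
    (hpos : ∀ j, 0 < ε j) (hmono : StrictMono ε) (hcount : ∀ j, 0 < nn j)
    (d : ℕ) (hd : 1 ≤ d) (α : ℕ) (hα : 1 ≤ α) (enlf : ℝ) (henlf : 0 ≤ enlf) :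
    errO hm (fun j => (1 / 2 : ℝ) * ε j) nn (1 / (d : ℝ))
      + (1 / (2 * (α : ℝ) + 1)) *
          ((∑ k ∈ Finset.Icc 1 (α + 1), errO hm (fun j => (k : ℝ) * ε j) nn 1)
            + (α : ℝ) * enlf) ≤
      min (8 / ((d : ℝ) ^ 2 * (ε (firstIdx hm)) ^ 2))
          (Zval hm nn + 8 / ((d : ℝ) ^ 2 * (ε (lastIdx hm)) ^ 2))
        + (1 / (2 * (α : ℝ) + 1)) *
            (min ((2 / (ε (firstIdx hm)) ^ 2) * sqHarmonic (α + 1))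
                (((α : ℝ) + 1) * Zval hm nn + (2 / (ε (lastIdx hm)) ^ 2) * sqHarmonic (α + 1))
              + (α : ℝ) * enlf) := by
  have hcast : ∀ k ∈ Finset.Icc 1 (α + 1), (0 : ℝ) < k := fun k hk =>
    Nat.cast_pos.mpr (Finset.mem_Icc.mp hk).1
  gcongr
  · refine le_min ?_ ?_
    · rw [← errDP_half]
      exact errO_scaled_le_first hm hmono.monotone nn _ (by norm_num)
    · rw [← errDP_half]
      exact errO_scaled_le_last hm hpos nn _ (by norm_num)
  · refine le_min ?_ ?_
    · rw [← sum_errDP_one]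
      exact Finset.sum_le_sum fun k hk =>
        errO_scaled_le_first hm hmono.monotone nn 1 (hcast k hk).le
    · rw [← sum_errDP_one]
      refine (Finset.sum_le_sum fun k hk =>
        errO_scaled_le_last hm hpos nn 1 (hcast k hk)).trans_eq ?_
      simp [Finset.sum_add_distrib]
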